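/- arXiv:2212.08644 — 3 statements merged into one kernel-verified Lean document; each statement's English description precedes it below -/
import Mathlib

section
/- Let A be a commutative ring and I ⊆ A an ideal, and let f₁, f₂ ∈ A be such that every prime ideal p of A with I ⊆ p and f₂ ∉ p also satisfies f₁ ∉ p (i.e. D(f₂) ∩ V(I) ⊆ D(f₁) ∩ V(I) in Spec A). Let B₁ be an A-algebra together with an A-algebra homomorphism from the localization A_{f₁} exhibiting B₁ as a Henselization of the pair (A_{f₁}, I·A_{f₁}), and similarly let B₂ be a Henselization of (A_{f₂}, I·A_{f₂}). Then there exists a unique A-algebra homomorphism B₁ → B₂. -/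
universe u

/-- A ring homomorphism `ρ : R →+* H` exhibits `H` as a Henselization of the pair `(R, K)`:
`(H, K·H)` is a Henselian pair, and every map from `(R, K)` to a Henselian pair factors
uniquely through `ρ`. -/
def IsHenselization {R H : Type u} [CommRing R] [CommRing H]
    (K : Ideal R) (ρ : R →+* H) : Prop :=
  HenselianRing H (K.map ρ) ∧
    ∀ (C : Type u) [CommRing C] (J : Ideal C), HenselianRing C J →
      ∀ f : R →+* C, K.map f ≤ J → ∃! g : H →+* C, g.comp ρ = f

/-- `φ : A →+* B` is Henselian finitely presented (hfp) with respect to `I`: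
`B` is a Henselization of `(R, I·R)` for some finitely presented `A`-algebra `R`. -/
def IsHfp {A B : Type u} [CommRing A] [CommRing B] (φ : A →+* B) (I : Ideal A) : Prop :=
  ∃ (R : Type u) (_ : CommRing R) (ψ : A →+* R) (ρ : R →+* B),
    ψ.FinitePresentation ∧ ρ.comp ψ = φ ∧ IsHenselization (I.map ψ) ρ

/-- `φ : A →+* B` is h-formally étale with respect to `I`. -/
def IsHFormallyEtale {A B : Type u} [CommRing A] [CommRing B] (φ : A →+* B) (I : Ideal A) :
    Prop :=
  ∀ (E C : Type u) [CommRing E] [CommRing C] (e : A →+* E) (c : A →+* C)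
    (p : E →+* C) (u : B →+* C),
    p.comp e = c → u.comp φ = c →
    (∃ N : ℕ, 1 ≤ N ∧ Ideal.map e (I ^ N) = ⊥ ∧ Ideal.map c (I ^ N) = ⊥) →
    Function.Surjective p →
    (∃ M : ℕ, 1 ≤ M ∧ RingHom.ker p ^ M = ⊥) →
    ∃! v : B →+* E, v.comp φ = e ∧ p.comp v = u

/-- `φ : A →+* B` is h-formally smooth with respect to `I`. -/
def IsHFormallySmooth {A B : Type u} [CommRing A] [CommRing B] (φ : A →+* B) (I : Ideal A) :
    Prop :=
  ∀ (E C : Type u) [CommRing E] [CommRing C] (e : A →+* E) (c : A →+* C)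
    (p : E →+* C) (u : B →+* C),
    p.comp e = c → u.comp φ = c →
    (∃ N : ℕ, 1 ≤ N ∧ Ideal.map e (I ^ N) = ⊥ ∧ Ideal.map c (I ^ N) = ⊥) →
    Function.Surjective p →
    (∃ M : ℕ, 1 ≤ M ∧ RingHom.ker p ^ M = ⊥) →
    ∃ v : B →+* E, v.comp φ = e ∧ p.comp v = u

/-- `φ : A →+* B` is h-étale with respect to `I`: `B` is a Henselization of `(R, I·R)`
for some étale `A`-algebra `R`. -/
def IsHEtale {A B : Type u} [CommRing A] [CommRing B] (φ : A →+* B) (I : Ideal A) : Prop :=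
  ∃ (R : Type u) (_ : CommRing R) (_ : Algebra A R) (ρ : R →+* B),
    Algebra.Etale A R ∧ ρ.comp (algebraMap A R) = φ ∧
      IsHenselization (I.map (algebraMap A R)) ρ

/-- `φ : A →+* B` is h-smooth with respect to `I`: `B` is a Henselization of `(R, I·R)`
for some smooth `A`-algebra `R`. -/
def IsHSmooth {A B : Type u} [CommRing A] [CommRing B] (φ : A →+* B) (I : Ideal A) : Prop :=
  ∃ (R : Type u) (_ : CommRing R) (_ : Algebra A R) (ρ : R →+* B),
    Algebra.Smooth A R ∧ ρ.comp (algebraMap A R) = φ ∧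
      IsHenselization (I.map (algebraMap A R)) ρ

/-- A ring homomorphism is flat if it makes the target into a flat module over the source. -/
def RingHomFlat {A C : Type u} [CommRing A] [CommRing C] (f : A →+* C) : Prop :=
  letI := f.toAlgebra
  Module.Flat A C

/-- A ring homomorphism is smooth if it makes the target into a smooth algebra over the
source (smooth = formally smooth + finitely presented). -/
def RingHomSmooth {A C : Type u} [CommRing A] [CommRing C] (f : A →+* C) : Prop :=
  letI := f.toAlgebra
  Algebra.Smooth A C

/-- A ring homomorphism is étale if it makes the target into an étale algebra over the
source (étale = formally étale + finitely presented). -/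
def RingHomEtale {A C : Type u} [CommRing A] [CommRing C] (f : A →+* C) : Prop :=
  letI := f.toAlgebra
  Algebra.Etale A C

/-!
Since `(B₂, I·B₂)` is a Henselian pair, the universal properties of localization and Henselization
give a unique `A`-algebra map `B₁ → B₂` as soon as `f₁` is invertible in `B₂`. As `I·B₂` lies in
the Jacobson radical of `B₂` and `f₂` is invertible there, every maximal ideal of `B₂` lies over a
point of `D(f₂) ∩ V(I)`, hence over a point of `D(f₁)`, so none of them contains the image of `f₁`.
-/

theorem le_comap_of_map_le_jacobson_bot {A C : Type*} [Semiring A] [Ring C]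
    {I : Ideal A} {φ : A →+* C} (hI : I.map φ ≤ Ideal.jacobson ⊥)
    (m : Ideal C) [m.IsMaximal] : I ≤ m.comap φ := by
  rw [Ideal.jacobson_bot] at hI
  exact Ideal.map_le_iff_le_comap.mp <| hI.trans (Ring.jacobson_le_of_isMaximal m)

theorem isUnit_map_of_map_le_jacobson_bot {A C : Type*} [CommSemiring A] [CommRing C]
    {I : Ideal A} {f₁ f₂ : A}
    (hsub : ∀ p : Ideal A, p.IsPrime → I ≤ p → f₂ ∉ p → f₁ ∉ p)
    {φ : A →+* C} (hI : I.map φ ≤ Ideal.jacobson ⊥) (hf₂ : IsUnit (φ f₂)) :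
    IsUnit (φ f₁) := by
  by_contra hf₁
  obtain ⟨m, hm, hf₁m⟩ := exists_max_ideal_of_mem_nonunits hf₁
  have hf₂m : f₂ ∉ m.comap φ := fun h ↦ hm.ne_top (m.eq_top_of_isUnit_mem h hf₂)
  exact hsub (m.comap φ) inferInstance (le_comap_of_map_le_jacobson_bot hI m) hf₂m hf₁m

theorem IsHenselization.existsUnique_comp_algebraMap {A : Type*} {S B C : Type u}
    [CommSemiring A] [CommRing S] [CommRing B] [CommRing C] [Algebra A S]
    (M : Submonoid A) [IsLocalization M S] {I : Ideal A} {ρ : S →+* B}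
    (hρ : IsHenselization (I.map (algebraMap A S)) ρ)
    {J : Ideal C} (hJ : HenselianRing C J) {φ : A →+* C} (hI : I.map φ ≤ J)
    (hM : ∀ s : M, IsUnit (φ s)) :
    ∃! g : B →+* C, g.comp (ρ.comp (algebraMap A S)) = φ := by
  let ψ : S →+* C := IsLocalization.lift hM
  have hψ : ψ.comp (algebraMap A S) = φ := IsLocalization.lift_comp hM
  have comp_eq_iff (g : B →+* C) :
      g.comp ρ = ψ ↔ g.comp (ρ.comp (algebraMap A S)) = φ := by
    rw [← RingHom.comp_assoc, ← hψ]
    exact ⟨fun h ↦ by rw [h], fun h ↦ IsLocalization.ringHom_ext M h⟩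
  have hIψ : (I.map (algebraMap A S)).map ψ ≤ J := by rwa [Ideal.map_map, hψ]
  simpa only [comp_eq_iff] using hρ.2 C J hJ ψ hIψ

theorem unique_map_between_henselizations_of_away_general {A : Type*} {S B C : Type u}
    [CommSemiring A] [CommRing S] [CommRing B] [CommRing C] [Algebra A S]
    {I : Ideal A} {f₁ f₂ : A} [IsLocalization.Away f₁ S]
    (hsub : ∀ p : Ideal A, p.IsPrime → I ≤ p → f₂ ∉ p → f₁ ∉ p)
    {ρ : S →+* B} (hρ : IsHenselization (I.map (algebraMap A S)) ρ)
    {J : Ideal C} (hJ : HenselianRing C J) {φ : A →+* C} (hI : I.map φ ≤ J)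
    (hf₂ : IsUnit (φ f₂)) :
    ∃! g : B →+* C, g.comp (ρ.comp (algebraMap A S)) = φ := by
  have hf₁ : IsUnit (φ f₁) := isUnit_map_of_map_le_jacobson_bot hsub (hI.trans hJ.jac) hf₂
  refine hρ.existsUnique_comp_algebraMap (Submonoid.powers f₁) hJ hI ?_
  rintro ⟨_, n, rfl⟩
  simpa only [map_pow] using hf₁.pow n

/-- If `D(f₂) ∩ V(I) ⊆ D(f₁) ∩ V(I)` in `Spec A`, and `B₁`, `B₂` are Henselizations of
`(A_{f₁}, I·A_{f₁})` and `(A_{f₂}, I·A_{f₂})` respectively, then there is a unique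
`A`-algebra homomorphism `B₁ → B₂`. -/
theorem unique_map_between_henselizations_of_away
    {A B₁ B₂ : Type u} [CommRing A] [CommRing B₁] [CommRing B₂]
    (I : Ideal A) (f₁ f₂ : A)
    (hsub : ∀ p : Ideal A, p.IsPrime → I ≤ p → f₂ ∉ p → f₁ ∉ p)
    (ρ₁ : Localization.Away f₁ →+* B₁) (ρ₂ : Localization.Away f₂ →+* B₂)
    (h₁ : IsHenselization (I.map (algebraMap A (Localization.Away f₁))) ρ₁)
    (h₂ : IsHenselization (I.map (algebraMap A (Localization.Away f₂))) ρ₂) :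
    ∃! g : B₁ →+* B₂,
      g.comp (ρ₁.comp (algebraMap A (Localization.Away f₁))) =
        ρ₂.comp (algebraMap A (Localization.Away f₂)) :=
  unique_map_between_henselizations_of_away_general hsub h₁ h₂.1
    (by rw [Ideal.map_map]) ((IsLocalization.Away.algebraMap_isUnit f₂).map ρ₂)
end

section
/- Let (A, I) be a Henselian pair. Let B be an A-algebra which is hfp over A with respect to I, and let C be a B-algebra which is hfp over B with respect to the ideal I·B. Then C, viewed as an A-algebra, is hfp over A with respect to I. (Composition of Henselian finitely presented maps is Henselian finitely presented.) -/
universe u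

/-!
Let `ρ : R → B` be a Henselization of `(R, K)`. Call an element of `B` captured if it comes from a
finitely presented `R`-algebra `R' → B` such that `R → R'` is an epimorphism for maps to Henselian
pairs. The captured elements form an `R`-subalgebra. It is closed under roots of the polynomials
`1 - a X + e G` with `e` in the ideal generated by `K`, because such a root is unique in every
Henselian pair and so can be adjoined to `R'`. Inverses and Hensel lifts are expressible through
such roots, so the subalgebra is Henselian and the universal property of `B` makes it all of `B`.

Given a finitely presented `B`-algebra `S`, one `R'` therefore captures the coefficients of a
presentation of `S`, and `S = M ⊗[R'] B` with `M` finitely presented over `R`. Since `R' → B` and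
its base change `M → S` induce bijections on maps to Henselian pairs, a Henselization of `S` is one
of `M`.
-/

open Polynomial TensorProduct

universe v

section HenselPoly

variable {R : Type*} [CommRing R]

/-- The polynomial `1 - a X + e G`. When `e` lies in the Jacobson radical it has at most one root,
a perturbation of the inverse of `a`; both inverses and Hensel lifts of roots can be recovered from
roots of such polynomials. -/
noncomputable def henselPoly (a e : R) (G : R[X]) : R[X] := 1 - C a * X + C e * G

lemma map_henselPoly {S : Type*} [CommRing S] (f : R →+* S) (a e : R) (G : R[X]) :
    (henselPoly a e G).map f = henselPoly (f a) (f e) (G.map f) := by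
  simp [henselPoly]

lemma aeval_henselPoly {S : Type*} [CommRing S] [Algebra R S] (a e : R) (G : R[X]) (x : S) :
    aeval x (henselPoly a e G) = 1 - algebraMap R S a * x + algebraMap R S e * aeval x G := by
  simp [henselPoly]

lemma eval_henselPoly (a e : R) (G : R[X]) (x : R) :
    (henselPoly a e G).eval x = 1 - a * x + e * G.eval x := by
  simp [henselPoly]

lemma eq_of_isRoot_henselPoly {a e x y : R} {G : R[X]} (he : e ∈ (⊥ : Ideal R).jacobson)
    (hx : (henselPoly a e G).IsRoot x) (hy : (henselPoly a e G).IsRoot y) : x = y := by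
  rw [IsRoot.def, eval_henselPoly] at hx hy
  obtain ⟨s, hs⟩ := sub_dvd_eval_sub x y G
  have hunit : IsUnit (a - e * s) := by
    refine isUnit_of_mul_isUnit_left (y := x) (Ideal.isUnit_of_sub_one_mem_jacobson_bot _ ?_)
    convert Ideal.mul_mem_right (G.eval x - s * x) _ he using 1
    linear_combination -hx
  rw [← sub_eq_zero, ← hunit.mul_right_eq_zero]
  linear_combination hy - hx + e * hs

lemma exists_comp_C_add_X_eq (f : R[X]) (a : R) :
    ∃ q : R[X], f.comp (C a + X) = C (f.eval a) + C (f.derivative.eval a) * X + q * X ^ 2 := by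
  obtain ⟨q, hq⟩ := binomExpansion (f.map C) (C a) X
  exact ⟨q, by simpa [eval_map, derivative_map, ← comp.eq_def] using hq⟩

end HenselPoly

section Henselian

variable {N B : Type*} [CommRing N] [CommRing B] [Algebra N B] {I : Ideal N} {J : Ideal B}

lemma isUnit_mk_iff_exists_mul_sub_one_mem {x : N} :
    IsUnit (Ideal.Quotient.mk I x) ↔ ∃ c, x * c - 1 ∈ I := by
  simp only [isUnit_iff_exists_inv, Ideal.Quotient.mk_surjective.exists, ← map_mul,
    ← Ideal.Quotient.eq, map_one]

lemma exists_mem_aeval_add_eq_zero [HenselianRing B J] (hIJ : I.map (algebraMap N B) ≤ J)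
    {f : N[X]} (hf : f.Monic) {a₀ c : N} (ha₀ : f.eval a₀ ∈ I)
    (hc : f.derivative.eval a₀ * c - 1 ∈ I) :
    ∃ s ∈ J, aeval (algebraMap N B a₀ + s) f = 0 := by
  have hmem {x : N} (hx : x ∈ I) : algebraMap N B x ∈ J := hIJ (Ideal.mem_map_of_mem _ hx)
  have hroot : (f.map (algebraMap N B)).eval (algebraMap N B a₀) ∈ J := by
    simpa only [eval_map_apply] using hmem ha₀
  have hsimple : IsUnit (Ideal.Quotient.mk J
      ((f.map (algebraMap N B)).derivative.eval (algebraMap N B a₀))) :=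
    isUnit_mk_iff_exists_mul_sub_one_mem.2 ⟨algebraMap N B c, by
      simpa only [derivative_map, eval_map_apply, map_sub, map_mul, map_one] using hmem hc⟩
  obtain ⟨a, ha, haJ⟩ := HenselianRing.is_henselian _ (hf.map _) _ hroot hsimple
  exact ⟨a - algebraMap N B a₀, haJ, by simpa using ha⟩

lemma exists_aeval_henselPoly_eq_zero [HenselianRing B J] (hIJ : I.map (algebraMap N B) ≤ J)
    {f : N[X]} (hf : f.Monic) {a₀ c : N} (ha₀ : f.eval a₀ ∈ I)
    (hc : f.derivative.eval a₀ * c - 1 ∈ I) :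
    ∃ (G : N[X]) (v : B), aeval v (henselPoly (f.derivative.eval a₀) (f.eval a₀) G) = 0 ∧
      aeval (algebraMap N B a₀ - algebraMap N B (f.eval a₀) * v) f = 0 := by
  -- With `e = f(a₀)`, `d = f'(a₀)` and `f(a₀ + s) = e + (d + q(s) s) s`, the root `a₀ + s` is
  -- `a₀ - e v` for `v` the inverse of `d + q(s) s`. Substituting `s = -e v` into
  -- `(d + q(s) s) v = 1` gives the equation satisfied by `v`.
  obtain ⟨s, hsJ, hfs⟩ := exists_mem_aeval_add_eq_zero hIJ hf ha₀ hc
  obtain ⟨q, hq⟩ := exists_comp_C_add_X_eq f a₀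
  set d := f.derivative.eval a₀
  set e := f.eval a₀
  have htaylor : algebraMap N B e + (algebraMap N B d + aeval s q * s) * s = 0 := by
    have := congrArg (aeval s) hq
    simp only [aeval_comp, map_add, map_mul, map_pow, aeval_C, aeval_X, hfs] at this
    linear_combination -this
  have hunit : (algebraMap N B d + aeval s q * s) * algebraMap N B c - 1 ∈ J := by
    convert add_mem (hIJ (Ideal.mem_map_of_mem _ hc))
      (J.mul_mem_left (aeval s q * algebraMap N B c) hsJ) using 1
    simp only [map_sub, map_mul, map_one]
    ring
  obtain ⟨v, hv⟩ := isUnit_iff_exists_inv.1 <| isUnit_of_mul_isUnit_left <|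
    Ideal.isUnit_of_sub_one_mem_jacobson_bot _ (HenselianRing.jac hunit)
  have hs : s = -algebraMap N B e * v := by linear_combination v * htaylor - s * hv
  have hqs : aeval v (q.comp (-C e * X)) = aeval s q := by simp [aeval_comp, hs]
  refine ⟨X ^ 2 * q.comp (-C e * X), v, ?_, ?_⟩
  · rw [aeval_henselPoly, map_mul, hqs, map_pow, aeval_X]
    linear_combination -hv + v * aeval s q * hs
  · rwa [sub_eq_add_neg, ← neg_mul, ← hs]

theorem henselianRing_of_forall_mem_range [HenselianRing B J]
    (hinj : Function.Injective (algebraMap N B)) (hIJ : I.map (algebraMap N B) ≤ J)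
    (hroot : ∀ (a : N), ∀ e ∈ I, ∀ (G : N[X]) (v : B), aeval v (henselPoly a e G) = 0 →
      v ∈ (algebraMap N B).range) :
    HenselianRing N I where
  jac x hx := by
    refine Ideal.mem_jacobson_bot.2 fun y => ?_
    have hxB : algebraMap N B x ∈ (⊥ : Ideal B).jacobson :=
      HenselianRing.jac (hIJ (Ideal.mem_map_of_mem _ hx))
    obtain ⟨w, hw⟩ := isUnit_iff_exists_inv.1 <|
      Ideal.mem_jacobson_bot.1 hxB (algebraMap N B y)
    obtain ⟨v, rfl⟩ := hroot (x * y + 1) 0 I.zero_mem 0 w (by simp [aeval_henselPoly, hw])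
    exact isUnit_iff_exists_inv.2 ⟨v, hinj (by simpa using hw)⟩
  is_henselian f hf a₀ ha₀ hf' := by
    obtain ⟨c, hc⟩ := isUnit_mk_iff_exists_mul_sub_one_mem.1 hf'
    obtain ⟨G, w, hw, hfw⟩ := exists_aeval_henselPoly_eq_zero hIJ hf ha₀ hc
    obtain ⟨v, rfl⟩ := hroot _ _ ha₀ G w hw
    refine ⟨a₀ - f.eval a₀ * v, hinj ?_, ?_⟩
    · rwa [← map_mul, ← map_sub, aeval_algebraMap_apply_eq_algebraMap_eval,
        ← map_zero (algebraMap N B)] at hfw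
    · rw [sub_sub_cancel_left]
      exact neg_mem (I.mul_mem_right _ ha₀)

end Henselian

section BaseChange

lemma includeRight_comp_algebraMap {R S T : Type*} [CommRing R] [CommRing S] [CommRing T]
    [Algebra R S] [Algebra R T] :
    (Algebra.TensorProduct.includeRight : T →ₐ[R] S ⊗[R] T).toRingHom.comp (algebraMap R T) =
      (algebraMap S (S ⊗[R] T)).comp (algebraMap R S) :=
  (Algebra.TensorProduct.includeRight : T →ₐ[R] S ⊗[R] T).comp_algebraMap.trans
    (IsScalarTower.algebraMap_eq R S (S ⊗[R] T))

lemma exists_finite_forall_mem_image {R N : Type*} [CommRing R] [CommRing N] [Algebra R N]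
    {K : Ideal R} {x : N} (hx : x ∈ K.map (algebraMap R N)) :
    ∃ s : Set N, s.Finite ∧ ∀ (R' : Type v) [CommRing R'] [Algebra R R'] (σ : R' →ₐ[R] N),
      s ⊆ Set.range σ → x ∈ σ '' (K.map (algebraMap R R')) := by
  obtain ⟨t, htK, c, rfl⟩ := (Submodule.mem_span_image_iff_exists_fun N).1 hx
  refine ⟨Set.range c, Set.finite_range c, fun R' _ _ σ hσ => ?_⟩
  choose c' hc' using fun i => hσ (Set.mem_range_self i)
  refine ⟨∑ i, c' i * algebraMap R R' i, Ideal.sum_mem _ fun i _ => Ideal.mul_mem_left _ _ <|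
    Ideal.mem_map_of_mem _ (htK i.2), ?_⟩
  simp [hc']

lemma exists_finitePresentation_tensorProduct_algEquiv {R : Type u} {ι : Type v}
    {B S σ : Type*} [CommRing R] [CommRing B] [CommRing S] [Algebra R B] [Algebra B S] [Algebra R S]
    [IsScalarTower R B S] [Finite ι] [Finite σ] (P : Algebra.Presentation B S ι σ) [P.HasCoeffs R] :
    ∃ (M : Type (max u v)) (_ : CommRing M) (_ : Algebra R M),
      Algebra.FinitePresentation R M ∧ Nonempty (M ⊗[R] B ≃ₐ[R] S) :=
  ⟨P.ModelOfHasCoeffs R, inferInstance, inferInstance, inferInstance,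
    ⟨(Algebra.TensorProduct.comm R _ B).trans
      ((P.tensorModelOfHasCoeffsEquiv R).restrictScalars R)⟩⟩

end BaseChange

section HenselianEquiv

variable {R S T : Type u} [CommRing R] [CommRing S] [CommRing T] {K : Ideal R}

/-- `τ : R →+* S` is an epimorphism as far as maps to Henselian pairs can tell: a map of pairs from
`(S, K·S)` to a Henselian pair is determined by its restriction to `R`. -/
def IsHenselianEpi (K : Ideal R) (τ : R →+* S) : Prop :=
  ∀ (D : Type u) [CommRing D] (J : Ideal D), HenselianRing D J →
    ∀ f g : S →+* D, K.map (f.comp τ) ≤ J → f.comp τ = g.comp τ → f = g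

/-- `τ : R →+* S` induces a bijection between the maps of pairs from `(S, K·S)` and those from
`(R, K)` to any Henselian pair. This is the universal property of the Henselization, without the
requirement that `(S, K·S)` itself be Henselian. -/
def IsHenselianEquiv (K : Ideal R) (τ : R →+* S) : Prop :=
  ∀ (D : Type u) [CommRing D] (J : Ideal D), HenselianRing D J →
    ∀ f : R →+* D, K.map f ≤ J → ∃! g : S →+* D, g.comp τ = f

lemma IsHenselianEpi.id : IsHenselianEpi K (RingHom.id R) :=
  fun _ _ _ _ _ _ _ h => h

lemma IsHenselianEpi.comp {σ : S →+* T} {τ : R →+* S} (hσ : IsHenselianEpi (K.map τ) σ)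
    (hτ : IsHenselianEpi K τ) : IsHenselianEpi K (σ.comp τ) :=
  fun D _ J hJ f g hK h => hσ D J hJ f g (by rwa [Ideal.map_map]) <|
    hτ D J hJ (f.comp σ) (g.comp σ) hK h

lemma IsHenselianEquiv.isHenselianEpi {τ : R →+* S} (hτ : IsHenselianEquiv K τ) :
    IsHenselianEpi K τ :=
  fun D _ J hJ f _ hK h => (hτ D J hJ (f.comp τ) hK).unique rfl h.symm

lemma IsHenselianEquiv.of_ringEquiv (e : R ≃+* S) : IsHenselianEquiv K (e : R →+* S) :=
  fun _ _ _ _ f _ => ⟨f.comp e.symm, by ext; simp, by rintro _ rfl; ext; simp⟩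

lemma IsHenselianEquiv.comp {σ : S →+* T} {τ : R →+* S} (hσ : IsHenselianEquiv (K.map τ) σ)
    (hτ : IsHenselianEquiv K τ) : IsHenselianEquiv K (σ.comp τ) := by
  intro D _ J hJ f hf
  obtain ⟨g, rfl, -⟩ := hτ D J hJ f hf
  obtain ⟨k, rfl, -⟩ := hσ D J hJ g (by rwa [Ideal.map_map])
  exact ⟨k, rfl, fun k' hk' =>
    (hσ.isHenselianEpi.comp hτ.isHenselianEpi D J hJ k k' hf hk'.symm).symm⟩

lemma IsHenselianEquiv.of_comp {σ : S →+* T} {τ : R →+* S}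
    (hστ : IsHenselianEquiv K (σ.comp τ)) (hτ : IsHenselianEpi K τ) :
    IsHenselianEquiv (K.map τ) σ := by
  intro D _ J hJ f hf
  rw [Ideal.map_map] at hf
  obtain ⟨g, hg, hunique⟩ := hστ D J hJ (f.comp τ) hf
  refine ⟨g, (hτ D J hJ f (g.comp σ) hf hg.symm).symm, ?_⟩
  rintro g' rfl
  exact hunique g' rfl

lemma IsHenselianEpi.tensorProduct [Algebra R S] [Algebra R T]
    (h : IsHenselianEpi K (algebraMap R T)) :
    IsHenselianEpi (K.map (algebraMap R S)) (algebraMap S (S ⊗[R] T)) := by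
  intro D _ J hJ f g hK hfg
  refine Algebra.TensorProduct.ringHom_ext hfg (h D J hJ _ _ ?_ ?_)
  · rwa [RingHom.comp_assoc, includeRight_comp_algebraMap, ← RingHom.comp_assoc, ← Ideal.map_map]
  · simp only [RingHom.comp_assoc, includeRight_comp_algebraMap]
    simp only [← RingHom.comp_assoc, hfg]

lemma IsHenselianEquiv.tensorProduct [Algebra R S] [Algebra R T]
    (h : IsHenselianEquiv K (algebraMap R T)) :
    IsHenselianEquiv (K.map (algebraMap R S)) (algebraMap S (S ⊗[R] T)) := by
  intro D _ J hJ f hK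
  obtain ⟨g, hg, -⟩ := h D J hJ (f.comp (algebraMap R S)) (by rwa [← Ideal.map_map])
  let : Algebra R D := (f.comp (algebraMap R S)).toAlgebra
  let fAlg : S →ₐ[R] D := ⟨f, fun _ => rfl⟩
  let gAlg : T →ₐ[R] D := ⟨g, RingHom.congr_fun hg⟩
  have hext : (Algebra.TensorProduct.productMap fAlg gAlg).toRingHom.comp
      (algebraMap S (S ⊗[R] T)) = f :=
    RingHom.ext fun x => Algebra.TensorProduct.productMap_left_apply fAlg gAlg x
  exact ⟨_, hext, fun k hk =>
    (h.isHenselianEpi.tensorProduct D J hJ _ k (by rwa [hext]) (hext.trans hk.symm)).symm⟩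

lemma isHenselianEpi_adjoinRoot_henselPoly {e : R} (he : e ∈ K) (a : R) (G : R[X]) :
    IsHenselianEpi K (algebraMap R (AdjoinRoot (henselPoly a e G))) := by
  intro D _ J hJ f g hK hfg
  have hroot (k : AdjoinRoot (henselPoly a e G) →+* D) : ((henselPoly a e G).map
      (k.comp (algebraMap R _))).IsRoot (k (AdjoinRoot.root _)) := by
    rw [IsRoot.def, eval_map, AdjoinRoot.algebraMap_eq, ← hom_eval₂, AdjoinRoot.eval₂_root,
      map_zero]
  have hf := hroot f
  have hg := hroot g
  rw [← hfg] at hg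
  rw [map_henselPoly] at hf hg
  exact AdjoinRoot.ringHom_ext hfg <|
    eq_of_isRoot_henselPoly (HenselianRing.jac (hK (Ideal.mem_map_of_mem _ he))) hf hg

end HenselianEquiv

section Capture

variable {R B : Type u} [CommRing R] [CommRing B] [Algebra R B] {K : Ideal R}

/-- A subset `s` of an `R`-algebra `B` is captured if it lies in the image of a finitely presented
`R`-algebra `R'` over `B` which is invisible to Henselian pairs, in that `R → R'` is an
`IsHenselianEpi`. Such `R'` play the role of the étale neighbourhoods whose colimit is the
Henselization of `(R, K)`. -/
def IsCaptured (K : Ideal R) (s : Set B) : Prop :=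
  ∃ (R' : Type u) (_ : CommRing R') (_ : Algebra R R') (σ : R' →ₐ[R] B),
    Algebra.FinitePresentation R R' ∧ IsHenselianEpi K (algebraMap R R') ∧ s ⊆ σ.range

lemma isCaptured_empty : IsCaptured K (∅ : Set B) :=
  ⟨R, _, _, Algebra.ofId R B, inferInstance, IsHenselianEpi.id, Set.empty_subset _⟩

lemma IsCaptured.of_subset_adjoin {s t : Set B} (ht : IsCaptured K t)
    (hst : s ⊆ Algebra.adjoin R t) : IsCaptured K s := by
  obtain ⟨R', _, _, σ, hfp, hepi, ht⟩ := ht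
  exact ⟨R', _, _, σ, hfp, hepi, hst.trans (Algebra.adjoin_le ht)⟩

lemma IsCaptured.union {s t : Set B} (hs : IsCaptured K s) (ht : IsCaptured K t) :
    IsCaptured K (s ∪ t) := by
  obtain ⟨R₁, _, _, σ₁, hfp₁, hepi₁, hs⟩ := hs
  obtain ⟨R₂, _, _, σ₂, hfp₂, hepi₂, ht⟩ := ht
  refine ⟨R₁ ⊗[R] R₂, inferInstance, inferInstance, Algebra.TensorProduct.productMap σ₁ σ₂,
    .trans R R₁ _, ?_, ?_⟩
  · rw [IsScalarTower.algebraMap_eq R R₁]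
    exact hepi₂.tensorProduct.comp hepi₁
  · rw [Algebra.TensorProduct.productMap_range]
    exact Set.union_subset (hs.trans (le_sup_left : σ₁.range ≤ _))
      (ht.trans (le_sup_right : σ₂.range ≤ _))

variable (K B) in
/-- The subalgebra of those elements of `B` that come from finitely presented `R`-algebras invisible
to Henselian pairs. -/
def capturedSubalgebra : Subalgebra R B where
  carrier := {b | IsCaptured K {b}}
  mul_mem' ha hb := (ha.union hb).of_subset_adjoin <| Set.singleton_subset_iff.2 <|
    mul_mem (Algebra.subset_adjoin (.inl rfl)) (Algebra.subset_adjoin (.inr rfl))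
  add_mem' ha hb := (ha.union hb).of_subset_adjoin <| Set.singleton_subset_iff.2 <|
    add_mem (Algebra.subset_adjoin (.inl rfl)) (Algebra.subset_adjoin (.inr rfl))
  algebraMap_mem' r := isCaptured_empty.of_subset_adjoin <| Set.singleton_subset_iff.2 <|
    algebraMap_mem _ r

lemma IsCaptured.subset_capturedSubalgebra {s : Set B} (hs : IsCaptured K s) :
    s ⊆ capturedSubalgebra B K :=
  fun _ hb => hs.of_subset_adjoin (Set.singleton_subset_iff.2 (Algebra.subset_adjoin hb))

lemma isCaptured_of_finite {s : Set B} (hs : s.Finite) (h : s ⊆ capturedSubalgebra B K) :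
    IsCaptured K s := by
  induction s, hs using Set.Finite.induction_on with
  | empty => exact isCaptured_empty
  | insert _ _ ih =>
    obtain ⟨hb, hs⟩ := Set.insert_subset_iff.1 h
    exact IsCaptured.union (s := {_}) hb (ih hs)

lemma exists_algHom_capturedSubalgebra {s : Set (capturedSubalgebra B K)} (hs : s.Finite) :
    ∃ (R' : Type u) (_ : CommRing R') (_ : Algebra R R') (σ : R' →ₐ[R] capturedSubalgebra B K),
      Algebra.FinitePresentation R R' ∧ IsHenselianEpi K (algebraMap R R') ∧
        s ⊆ Set.range σ := by
  obtain ⟨R', _, _, σ, hfp, hepi, hsσ⟩ := isCaptured_of_finite (K := K)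
    (hs.image (capturedSubalgebra B K).val) (Subtype.coe_image_subset _ s)
  have hσ : σ.range ≤ capturedSubalgebra B K :=
    IsCaptured.subset_capturedSubalgebra ⟨R', _, _, σ, hfp, hepi, subset_rfl⟩
  refine ⟨R', _, _, σ.codRestrict _ fun x => hσ ⟨x, rfl⟩, hfp, hepi, fun b hb => ?_⟩
  obtain ⟨x, hx⟩ := hsσ (Set.mem_image_of_mem _ hb)
  exact ⟨x, Subtype.ext hx⟩

lemma mem_capturedSubalgebra_of_aeval_henselPoly_eq_zero {a e : capturedSubalgebra B K}
    (he : e ∈ K.map (algebraMap R (capturedSubalgebra B K))) {G : (capturedSubalgebra B K)[X]}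
    {v : B} (hv : aeval v (henselPoly a e G) = 0) : v ∈ capturedSubalgebra B K := by
  obtain ⟨s, hs, hsK⟩ := exists_finite_forall_mem_image he
  obtain ⟨R', _, _, σ, hfp, hepi, hσ⟩ := exists_algHom_capturedSubalgebra
    ((hs.insert a).union G.coeffs.finite_toSet)
  rw [Set.union_subset_iff, Set.insert_subset_iff] at hσ
  obtain ⟨⟨⟨a, rfl⟩, hsσ⟩, hG⟩ := hσ
  obtain ⟨e, heK, rfl⟩ := hsK R' σ hsσ
  obtain ⟨G, rfl⟩ := (lifts_iff_coeffs_subset_range (f := (σ : R' →+* _)) G).2 hG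
  let h := henselPoly a e G
  have hroot : h.eval₂ ((capturedSubalgebra B K).val.comp σ) v = 0 := by
    rwa [coe_mapRingHom, ← RingHom.coe_coe σ, ← map_henselPoly, aeval_def, eval₂_map] at hv
  refine ⟨AdjoinRoot h, inferInstance, inferInstance, AdjoinRoot.liftAlgHom h _ v hroot,
    .trans R R' _, ?_, ?_⟩
  · rw [IsScalarTower.algebraMap_eq R R']
    exact (isHenselianEpi_adjoinRoot_henselPoly heK a G).comp hepi
  · exact Set.singleton_subset_iff.2 ⟨AdjoinRoot.root h, by simp⟩

theorem henselianRing_capturedSubalgebra [HenselianRing B (K.map (algebraMap R B))] :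
    HenselianRing (capturedSubalgebra B K) (K.map (algebraMap R (capturedSubalgebra B K))) := by
  refine henselianRing_of_forall_mem_range (J := K.map (algebraMap R B)) Subtype.val_injective ?_ ?_
  · rw [Ideal.map_map, ← IsScalarTower.algebraMap_eq]
  · intro a e he G v hv
    exact ⟨⟨v, mem_capturedSubalgebra_of_aeval_henselPoly_eq_zero he hv⟩, rfl⟩

theorem IsHenselization.capturedSubalgebra_eq_top (h : IsHenselization K (algebraMap R B)) :
    capturedSubalgebra B K = ⊤ := by
  have := h.1
  obtain ⟨g, hg, -⟩ :=
    h.2 _ _ (henselianRing_capturedSubalgebra (B := B)) (algebraMap R _) le_rfl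
  have hid : (capturedSubalgebra B K).val.toRingHom.comp g = RingHom.id B :=
    (h.2 B _ h.1 (algebraMap R B) le_rfl).unique
      (by rw [RingHom.comp_assoc, hg]; rfl) (RingHom.id_comp _)
  refine Algebra.eq_top_iff.2 fun b => ?_
  rw [← RingHom.id_apply b, ← hid]
  exact (g b).2

end Capture

lemma IsHenselization.comp_isHenselianEquiv {R S T : Type u} [CommRing R] [CommRing S]
    [CommRing T] {K : Ideal R} {σ : S →+* T} {τ : R →+* S} (hσ : IsHenselization (K.map τ) σ)
    (hτ : IsHenselianEquiv K τ) : IsHenselization K (σ.comp τ) :=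
  ⟨Ideal.map_map τ σ ▸ hσ.1, IsHenselianEquiv.comp hσ.2 hτ⟩

theorem IsHenselization.exists_finitePresentation_isHenselianEquiv {R B S : Type u} [CommRing R]
    [CommRing B] [CommRing S] {K : Ideal R} {ρ : R →+* B} (hρ : IsHenselization K ρ)
    {ψ : B →+* S} (hψ : ψ.FinitePresentation) :
    ∃ (M : Type u) (_ : CommRing M) (μ : R →+* M) (ν : M →+* S),
      μ.FinitePresentation ∧ ν.comp μ = ψ.comp ρ ∧ IsHenselianEquiv (K.map μ) ν := by
  algebraize [ρ, ψ]
  let P := Algebra.Presentation.ofFinitePresentation B S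
  obtain ⟨R', _, _, σ, hfp, hepi, hσ⟩ :=
    isCaptured_of_finite P.finite_coeffs fun _ _ => hρ.capturedSubalgebra_eq_top ▸ Algebra.mem_top
  algebraize [(σ : R' →+* B), ψ.comp (σ : R' →+* B)]
  have : P.HasCoeffs R' := ⟨hσ⟩
  obtain ⟨M, _, _, hM, ⟨ε⟩⟩ := exists_finitePresentation_tensorProduct_algEquiv (R := R') P
  have hσequiv : IsHenselianEquiv (K.map (algebraMap R R')) (algebraMap R' B) :=
    .of_comp (σ.comp_algebraMap ▸ hρ.2) hepi
  have hνR' : ((ε : M ⊗[R'] B →+* S).comp (algebraMap M _)).comp (algebraMap R' M) =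
      ψ.comp σ := by
    rw [RingHom.comp_assoc, ← IsScalarTower.algebraMap_eq]
    exact ε.toAlgHom.comp_algebraMap
  refine ⟨M, inferInstance, (algebraMap R' M).comp (algebraMap R R'),
    (ε : M ⊗[R'] B →+* S).comp (algebraMap M _), ?_, ?_, ?_⟩
  · exact .comp (RingHom.finitePresentation_algebraMap.2 hM)
      (RingHom.finitePresentation_algebraMap.2 hfp)
  · rw [← RingHom.comp_assoc, hνR', RingHom.comp_assoc, σ.comp_algebraMap]
    rfl
  · rw [← Ideal.map_map]
    exact (IsHenselianEquiv.of_ringEquiv ε.toRingEquiv).comp hσequiv.tensorProduct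

theorem isHfp_comp_general {A B C : Type u} [CommRing A] [CommRing B] [CommRing C]
    {φ : A →+* B} {χ : B →+* C} {I : Ideal A} (hφ : IsHfp φ I) (hχ : IsHfp χ (I.map φ)) :
    IsHfp (χ.comp φ) I := by
  obtain ⟨R, _, ψ, ρ, hψ, rfl, hρ⟩ := hφ
  obtain ⟨S, _, ψ', ρ', hψ', rfl, hρ'⟩ := hχ
  obtain ⟨M, _, μ, ν, hμ, hνμ, hν⟩ := hρ.exists_finitePresentation_isHenselianEquiv hψ'
  have hcomp : ν.comp (μ.comp ψ) = ψ'.comp (ρ.comp ψ) := by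
    rw [← RingHom.comp_assoc, hνμ, RingHom.comp_assoc]
  refine ⟨M, inferInstance, μ.comp ψ, ρ'.comp ν, hμ.comp hψ, ?_, ?_⟩
  · rw [RingHom.comp_assoc, hcomp, RingHom.comp_assoc]
  · rw [Ideal.map_map] at hρ' hν
    exact IsHenselization.comp_isHenselianEquiv (by rwa [Ideal.map_map, hcomp]) hν

/-- Composition of Henselian finitely presented maps is Henselian finitely presented. -/
theorem isHfp_comp {A B C : Type u} [CommRing A] [CommRing B] [CommRing C]
    [Algebra A B] [Algebra B C] [Algebra A C] [IsScalarTower A B C]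
    (I : Ideal A) [HenselianRing A I]
    (hB : IsHfp (algebraMap A B) I)
    (hC : IsHfp (algebraMap B C) (I.map (algebraMap A B))) :
    IsHfp (algebraMap A C) I := by
  rw [IsScalarTower.algebraMap_eq A B C]
  exact isHfp_comp_general hB hC
end

section
/- Let (A, I) be a Henselian pair and let B and C be A-algebras, each of which is hfp over A with respect to I. Then for any A-algebra homomorphism Φ : B → C, the B-algebra C (via Φ) is hfp over B with respect to the ideal I·B. -/
universe u

/-!
A Henselization `C` of `(S, K)` is the union of the images of the finitely presented `S`-algebras
that have the same Henselization as `(S, K)`: this union is itself a Henselian pair, since units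
and simple roots can be adjoined to such an algebra, so by the universal property it is all of `C`.
Now present `B` as a Henselization of a quotient of `A[x₁, …, xₙ]` and `C` as one of a finitely
presented `A`-algebra `S`. Then `A[x₁, …, xₙ] → B → C` factors through some such `S`-algebra `T`,
and `C` is a Henselization of the pushout `B ⊗ T` over `A[x₁, …, xₙ]`, because
`A[x₁, …, xₙ] → B` is an epimorphism with respect to Henselian pairs.
-/

open Polynomial TensorProduct

section RootsNearby

variable {D : Type*} [CommRing D] {J : Ideal D}

theorem isUnit_of_isUnit_quotientMk (hJ : J ≤ Ideal.jacobson ⊥) {x : D}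
    (hx : IsUnit (Ideal.Quotient.mk J x)) : IsUnit x :=
  have := isLocalHom_of_le_jacobson_bot J hJ
  hx.of_map

theorem quotientMk_eval_eq_of_sub_mem (p : D[X]) {d a : D} (h : d - a ∈ J) :
    Ideal.Quotient.mk J (p.eval d) = Ideal.Quotient.mk J (p.eval a) :=
  Ideal.Quotient.eq.2 (J.mem_of_dvd (sub_dvd_eval_sub d a p) h)

theorem eq_of_isRoot_of_sub_mem (hJ : J ≤ Ideal.jacobson ⊥) {f : D[X]} {x y : D}
    (hx : f.IsRoot x) (hy : f.IsRoot y) (hxy : y - x ∈ J)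
    (hf : IsUnit (Ideal.Quotient.mk J (f.derivative.eval x))) : x = y := by
  obtain ⟨c, hc⟩ := exists_mul_sq_add_linear_part_eq_eval_add f x (y - x)
  have hunit : IsUnit (c * (y - x) + f.derivative.eval x) :=
    isUnit_of_isUnit_quotientMk hJ <| by
      rwa [map_add, Ideal.Quotient.eq_zero_iff_mem.2 (J.mul_mem_left c hxy), zero_add]
  rw [add_sub_cancel, hx.eq_zero, hy.eq_zero] at hc
  exact (sub_eq_zero.1 (hunit.mul_right_eq_zero.1 (by linear_combination hc))).symm

theorem existsUnique_isRoot_sub_mem [HenselianRing D J] {f : D[X]} (hf : f.Monic) {a : D}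
    (ha : f.eval a ∈ J) (hu : IsUnit (Ideal.Quotient.mk J (f.derivative.eval a))) :
    ∃! d, f.IsRoot d ∧ d - a ∈ J := by
  obtain ⟨d, hd, hda⟩ := HenselianRing.is_henselian f hf a ha hu
  refine ⟨d, ⟨hd, hda⟩, fun d' ⟨hd', hda'⟩ => ?_⟩
  refine (eq_of_isRoot_of_sub_mem (HenselianRing.jac (I := J)) hd hd' ?_ ?_).symm
  · simpa using J.sub_mem hda' hda
  · rwa [quotientMk_eval_eq_of_sub_mem _ hda]

/-- The algebra cutting out the root of `f` near `a`: the polynomial `f` becomes zero, and both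
`f'` and the difference quotient `(f - f(a)) / (X - a)` are inverted. -/
@[simps]
noncomputable def rootNearPair {S : Type*} [CommRing S] {f : S[X]} (hf : f.Monic) (a : S) :
    StandardEtalePair S where
  f := f
  monic_f := hf
  g := f.derivative * (f /ₘ (X - C a))
  cond := ⟨f /ₘ (X - C a), 0, 1, by ring⟩

-- Evaluate `f = (X - a) * q + f(a)` at the root `d`; moreover `q(d) ≡ q(a) = f'(a)` if `d ≡ a`.
theorem isUnit_derivative_mul_divByMonic_iff (hJ : J ≤ Ideal.jacobson ⊥) {f : D[X]}
    {a d : D} (hd : f.IsRoot d) (ha : f.eval a ∈ J)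
    (hu : IsUnit (Ideal.Quotient.mk J (f.derivative.eval a))) :
    IsUnit ((f.derivative * (f /ₘ (X - C a))).eval d) ↔ d - a ∈ J := by
  constructor
  · intro h
    have hroot : f.eval a + (d - a) * (f /ₘ (X - C a)).eval d = 0 := by
      have h_div := congrArg (eval d) (modByMonic_add_div f (X - C a))
      rwa [modByMonic_X_sub_C_eq_C_eval, eval_add, eval_mul, eval_C, eval_sub, eval_X, eval_C,
        hd.eq_zero] at h_div
    rw [eval_mul] at h
    rw [← Ideal.mul_unit_mem_iff_mem J (isUnit_of_mul_isUnit_right h),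
      eq_neg_of_add_eq_zero_right hroot]
    exact J.neg_mem ha
  · intro h
    have hq : (f /ₘ (X - C a)).eval a = f.derivative.eval a := by
      simpa using
        congrArg (eval a) (divByMonic_add_X_sub_C_mul_derivative_divByMonic_eq_derivative f a)
    apply isUnit_of_isUnit_quotientMk hJ
    rw [quotientMk_eval_eq_of_sub_mem _ h, eval_mul, hq, map_mul]
    exact hu.mul hu

theorem rootNearPair_hasMap_iff (hJ : J ≤ Ideal.jacobson ⊥) {S : Type*} [CommRing S]
    [Algebra S D] {f : S[X]} (hf : f.Monic) {a : S} (ha : algebraMap S D (f.eval a) ∈ J)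
    (hu : IsUnit (Ideal.Quotient.mk J (algebraMap S D (f.derivative.eval a)))) (d : D) :
    (rootNearPair hf a).HasMap d ↔
      (f.map (algebraMap S D)).IsRoot d ∧ d - algebraMap S D a ∈ J := by
  rw [← eval_map_apply] at ha hu
  rw [← derivative_map] at hu
  rw [StandardEtalePair.HasMap, rootNearPair_f, rootNearPair_g, ← eval_map_algebraMap,
    ← eval_map_algebraMap]
  refine and_congr_right fun hd => ?_
  rw [← isUnit_derivative_mul_divByMonic_iff hJ hd ha hu, Polynomial.map_mul, derivative_map,
    map_divByMonic _ (monic_X_sub_C a), Polynomial.map_sub, map_X, map_C]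

end RootsNearby

section HenselEquiv

variable {S T U : Type u} [CommRing S] [CommRing T] [CommRing U] {K : Ideal S}
  {σ : S →+* T} {τ : T →+* U}

/-- `σ : S →+* T` is an epimorphism as far as maps from `(S, K)` to Henselian pairs are
concerned: such a map has at most one extension along `σ`. -/
def IsHenselEpi (K : Ideal S) (σ : S →+* T) : Prop :=
  ∀ (D : Type u) [CommRing D] (J : Ideal D), HenselianRing D J →
    ∀ g₁ g₂ : T →+* D, K.map (g₁.comp σ) ≤ J → g₁.comp σ = g₂.comp σ → g₁ = g₂

/-- `σ : S →+* T` induces an isomorphism of Henselizations with respect to `K`, expressed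
through the universal property: every map from `(S, K)` to a Henselian pair extends uniquely
along `σ`. -/
def IsHenselEquiv (K : Ideal S) (σ : S →+* T) : Prop :=
  ∀ (D : Type u) [CommRing D] (J : Ideal D), HenselianRing D J →
    ∀ f : S →+* D, K.map f ≤ J → ∃! g : T →+* D, g.comp σ = f

theorem IsHenselEpi.comp_surjective {π : S →+* T} (hπ : Function.Surjective π)
    (hτ : IsHenselEpi (K.map π) τ) : IsHenselEpi K (τ.comp π) := by
  intro D _ J hD g₁ g₂ hg h
  refine hτ D J hD g₁ g₂ (by rwa [Ideal.map_map]) ?_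
  exact (RingHom.cancel_right hπ).1 h

theorem IsHenselEpi.includeRight [Algebra S T] [Algebra S U]
    (h : IsHenselEpi K (algebraMap S T)) :
    IsHenselEpi (K.map (algebraMap S U))
      (Algebra.TensorProduct.includeRight : U →ₐ[S] T ⊗[S] U).toRingHom := by
  intro D _ J hD g₁ g₂ hg hU
  have hbase (g : T ⊗[S] U →+* D) :
      (g.comp Algebra.TensorProduct.includeLeftRingHom).comp (algebraMap S T) =
        (g.comp (Algebra.TensorProduct.includeRight : U →ₐ[S] T ⊗[S] U).toRingHom).comp
          (algebraMap S U) := by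
    rw [RingHom.comp_assoc, Algebra.TensorProduct.includeLeftRingHom_comp_algebraMap,
      RingHom.comp_assoc]
  refine Algebra.TensorProduct.ringHom_ext (h D J hD _ _ ?_ ?_) hU
  · rwa [hbase, ← Ideal.map_map]
  · rw [hbase, hbase, hU]

namespace IsHenselEquiv

theorem isHenselEpi (h : IsHenselEquiv K σ) : IsHenselEpi K σ :=
  fun D _ J hD g₁ _ hg h₁₂ => (h D J hD (g₁.comp σ) hg).unique rfl h₁₂.symm

protected theorem id (K : Ideal S) : IsHenselEquiv K (RingHom.id S) :=
  fun _ _ _ _ f _ => ⟨f, rfl, fun _ hg => hg⟩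

theorem comp (hτ : IsHenselEquiv (K.map σ) τ) (hσ : IsHenselEquiv K σ) :
    IsHenselEquiv K (τ.comp σ) := by
  intro D _ J hD f hf
  obtain ⟨g, rfl, hg⟩ := hσ D J hD f hf
  obtain ⟨h, rfl, hh⟩ := hτ D J hD g (by rwa [Ideal.map_map])
  exact ⟨h, rfl, fun h' hh' => hh h' (hg _ hh')⟩

theorem of_comp (hσ : IsHenselEpi K σ) (hτσ : IsHenselEquiv K (τ.comp σ)) :
    IsHenselEquiv (K.map σ) τ := by
  intro D _ J hD f hf
  rw [Ideal.map_map] at hf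
  obtain ⟨g, hg, hg_unique⟩ := hτσ D J hD (f.comp σ) hf
  refine ⟨g, (hσ D J hD f _ hf hg.symm).symm, fun g' hg' => hg_unique g' ?_⟩
  rw [← hg', RingHom.comp_assoc]

theorem includeRight [Algebra S T] [Algebra S U] (h : IsHenselEquiv K (algebraMap S T)) :
    IsHenselEquiv (K.map (algebraMap S U))
      (Algebra.TensorProduct.includeRight : U →ₐ[S] T ⊗[S] U).toRingHom := by
  intro D _ J hD f hf
  obtain ⟨g, hg, -⟩ := h D J hD (f.comp (algebraMap S U)) (by rwa [← Ideal.map_map])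
  algebraize [f.comp (algebraMap S U)]
  let fU : U →ₐ[S] D := { f with commutes' := fun _ => rfl }
  let gT : T →ₐ[S] D := { g with commutes' := fun r => congr($hg r) }
  have hfU : (Algebra.TensorProduct.productMap gT fU).toRingHom.comp
      (Algebra.TensorProduct.includeRight : U →ₐ[S] T ⊗[S] U).toRingHom = f :=
    congr(($(Algebra.TensorProduct.productMap_right gT fU)).toRingHom)
  refine ⟨_, hfU, fun k hk => ?_⟩
  exact h.isHenselEpi.includeRight D J hD k _ (by rwa [hk]) (hk.trans hfU.symm)

theorem localizationAway {y : S} (hy : y - 1 ∈ K) :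
    IsHenselEquiv K (algebraMap S (Localization.Away y)) := by
  intro D _ J hD f hf
  have hfy : IsUnit (f y) := Ideal.isUnit_of_sub_one_mem_jacobson_bot _ <|
    hD.jac (by simpa using hf (Ideal.mem_map_of_mem f hy))
  refine ⟨IsLocalization.Away.lift y hfy, IsLocalization.Away.lift_comp y hfy, fun g hg => ?_⟩
  apply IsLocalization.ringHom_ext (Submonoid.powers y)
  rw [hg, IsLocalization.Away.lift_comp]

theorem rootNearPair_ring {f : S[X]} (hf : f.Monic) {a : S} (ha : f.eval a ∈ K)
    (hu : IsUnit (Ideal.Quotient.mk K (f.derivative.eval a))) :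
    IsHenselEquiv K (algebraMap S (rootNearPair hf a).Ring) := by
  intro D _ J hD φ hφ
  algebraize [φ]
  rw [Ideal.map_le_iff_le_comap] at hφ
  have ha' : φ (f.eval a) ∈ J := hφ ha
  have hu' : IsUnit (Ideal.Quotient.mk J (φ (f.derivative.eval a))) :=
    hu.map (Ideal.quotientMap J φ hφ)
  have hmap := rootNearPair_hasMap_iff hD.jac hf ha' hu'
  obtain ⟨d, hd, hd_unique⟩ := existsUnique_isRoot_sub_mem (hf.map φ) (a := φ a)
    (by rwa [eval_map_apply]) (by rwa [derivative_map, eval_map_apply])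
  refine ⟨(rootNearPair hf a).lift d ((hmap d).2 hd), AlgHom.comp_algebraMap _, fun g hg => ?_⟩
  let g' : (rootNearPair hf a).Ring →ₐ[S] D := { g with commutes' := fun s => congr($hg s) }
  have hgX : g' (rootNearPair hf a).X = d :=
    hd_unique _ ((hmap _).1 (StandardEtalePair.hasMap_X.map g'))
  have hgl : g' = (rootNearPair hf a).lift d ((hmap d).2 hd) :=
    StandardEtalePair.hom_ext (by rw [hgX, StandardEtalePair.lift_X])
  exact congr(($hgl).toRingHom)

theorem exists_retraction (h : IsHenselEquiv K σ) :
    ∃ r : T ⧸ K.map σ →+* S ⧸ K,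
      ∀ x, r (Ideal.Quotient.mk _ (σ x)) = Ideal.Quotient.mk K x := by
  -- Every pair with zero ideal is Henselian, in particular `(S ⧸ K, ⊥)`.
  obtain ⟨r, hr, -⟩ := h (S ⧸ K) ⊥ inferInstance (Ideal.Quotient.mk K) (by simp)
  have hr_ker : ∀ t ∈ K.map σ, r t = 0 := by
    change K.map σ ≤ RingHom.ker r
    rw [RingHom.ker, ← Ideal.map_le_iff_le_comap, Ideal.map_map, hr, Ideal.map_quotient_self]
  exact ⟨Ideal.Quotient.lift _ r hr_ker, fun x => congr($hr x)⟩

theorem mem_of_map_mem (h : IsHenselEquiv K σ) {x : S} (hx : σ x ∈ K.map σ) : x ∈ K := by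
  obtain ⟨r, hr⟩ := h.exists_retraction
  rw [← Ideal.Quotient.eq_zero_iff_mem, ← hr, Ideal.Quotient.eq_zero_iff_mem.2 hx, map_zero]

theorem isUnit_quotientMk_of_map (h : IsHenselEquiv K σ) {x : S}
    (hx : IsUnit (Ideal.Quotient.mk (K.map σ) (σ x))) : IsUnit (Ideal.Quotient.mk K x) := by
  obtain ⟨r, hr⟩ := h.exists_retraction
  exact hr x ▸ hx.map r

end IsHenselEquiv

end HenselEquiv

/-- A finitely presented approximation of `ρ : S →+* C`: a factorization of `ρ` through a
finitely presented `S`-algebra with the same Henselization as `(S, K)`. If `ρ` is a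
Henselization, then `C` is the union of the images of these algebras. -/
structure HenselApprox {S C : Type u} [CommRing S] [CommRing C] (K : Ideal S) (ρ : S →+* C) where
  Ring : Type u
  [commRing : CommRing Ring]
  ofBase : S →+* Ring
  toTarget : Ring →+* C
  finitePresentation : ofBase.FinitePresentation
  isHenselEquiv : IsHenselEquiv K ofBase
  comp_eq : toTarget.comp ofBase = ρ

attribute [instance] HenselApprox.commRing

/-- The elements of `C` coming from a finitely presented approximation of `ρ`. -/
def approxSubring {S C : Type u} [CommRing S] [CommRing C] (K : Ideal S) (ρ : S →+* C) :
    Subring C :=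
  ⨆ P : HenselApprox K ρ, P.toTarget.range

namespace HenselApprox

variable {S C : Type u} [CommRing S] [CommRing C] {K : Ideal S} {ρ : S →+* C}

/-- The base `S` as an approximation of itself. -/
def base (K : Ideal S) (ρ : S →+* C) : HenselApprox K ρ where
  Ring := S
  ofBase := RingHom.id S
  toTarget := ρ
  finitePresentation := .id S
  isHenselEquiv := .id K
  comp_eq := rfl

instance : Nonempty (HenselApprox K ρ) := ⟨base K ρ⟩

/-- The approximation obtained by approximating an approximation. -/
def trans (P : HenselApprox K ρ) (Q : HenselApprox (K.map P.ofBase) P.toTarget) :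
    HenselApprox K ρ where
  Ring := Q.Ring
  ofBase := Q.ofBase.comp P.ofBase
  toTarget := Q.toTarget
  finitePresentation := Q.finitePresentation.comp P.finitePresentation
  isHenselEquiv := Q.isHenselEquiv.comp P.isHenselEquiv
  comp_eq := by rw [← RingHom.comp_assoc, Q.comp_eq, P.comp_eq]

theorem directed_range : Directed (· ≤ ·) fun P : HenselApprox K ρ => P.toTarget.range := by
  intro P Q
  algebraize [P.ofBase, Q.ofBase, ρ]
  have : Algebra.FinitePresentation S P.Ring := P.finitePresentation
  have : Algebra.FinitePresentation S Q.Ring := Q.finitePresentation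
  let p : P.Ring →ₐ[S] C := { P.toTarget with commutes' := fun r => congr($P.comp_eq r) }
  let q : Q.Ring →ₐ[S] C := { Q.toTarget with commutes' := fun r => congr($Q.comp_eq r) }
  let R : HenselApprox K ρ :=
    { Ring := P.Ring ⊗[S] Q.Ring
      ofBase := algebraMap S _
      toTarget := (Algebra.TensorProduct.productMap p q).toRingHom
      finitePresentation := RingHom.finitePresentation_algebraMap.2
        (Algebra.FinitePresentation.trans S P.Ring (P.Ring ⊗[S] Q.Ring))
      isHenselEquiv := by
        rw [← Algebra.TensorProduct.includeRight.comp_algebraMap]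
        exact (P.isHenselEquiv.includeRight (T := P.Ring)).comp Q.isHenselEquiv
      comp_eq := (Algebra.TensorProduct.productMap p q).comp_algebraMap }
  refine ⟨R, ?_, ?_⟩
  · rintro _ ⟨x, rfl⟩
    exact ⟨x ⊗ₜ 1, Algebra.TensorProduct.productMap_left_apply p q x⟩
  · rintro _ ⟨x, rfl⟩
    exact ⟨1 ⊗ₜ x, Algebra.TensorProduct.productMap_right_apply p q x⟩

theorem mem_approxSubring_iff {c : C} :
    c ∈ approxSubring K ρ ↔ ∃ P : HenselApprox K ρ, c ∈ P.toTarget.range :=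
  Subring.mem_iSup_of_directed directed_range

theorem exists_subset_range {s : Finset C} (hs : (s : Set C) ⊆ approxSubring K ρ) :
    ∃ P : HenselApprox K ρ, (s : Set C) ⊆ P.toTarget.range :=
  directed_range.exists_mem_subset_of_finset_subset_biUnion fun _ hc =>
    Set.mem_iUnion.2 (mem_approxSubring_iff.1 (hs hc))

theorem toTarget_trans_mem (P : HenselApprox K ρ)
    (Q : HenselApprox (K.map P.ofBase) P.toTarget) (x : Q.Ring) :
    Q.toTarget x ∈ approxSubring K ρ :=
  mem_approxSubring_iff.2 ⟨P.trans Q, x, rfl⟩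

theorem exists_monic_lift {f : C[X]} (hf : f.Monic) (hcoeff : ∀ n, f.coeff n ∈ approxSubring K ρ)
    {a : C} (ha : a ∈ approxSubring K ρ) :
    ∃ (P : HenselApprox K ρ) (p : P.Ring[X]) (b : P.Ring),
      p.Monic ∧ p.map P.toTarget = f ∧ P.toTarget b = a := by
  classical
  obtain ⟨P, hP⟩ := exists_subset_range (s := insert a f.coeffs) (K := K) (ρ := ρ) <| by
    rw [Finset.coe_insert, Set.insert_subset_iff]
    refine ⟨ha, fun c hc => ?_⟩
    obtain ⟨n, -, rfl⟩ := mem_coeffs_iff.1 hc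
    exact hcoeff n
  rw [Finset.coe_insert, Set.insert_subset_iff] at hP
  obtain ⟨⟨b, hb⟩, hP⟩ := hP
  have hlifts : f ∈ lifts P.toTarget := by
    refine (lifts_iff_coeff_lifts f).2 fun n => ?_
    by_cases hn : f.coeff n = 0
    · exact ⟨0, by rw [map_zero, hn]⟩
    · exact hP (coeff_mem_coeffs hn)
  obtain ⟨p, hp, -, hp_monic⟩ := lifts_and_natDegree_eq_and_monic hlifts hf
  exact ⟨P, p, b, hp_monic, hp, hb⟩

theorem exists_ringHom_mvPolynomial {A ι : Type*} [CommRing A] [Finite ι] {α : A →+* S}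
    {θ : MvPolynomial ι A →+* C} (hθ : θ.comp MvPolynomial.C = ρ.comp α)
    (hmem : ∀ i, θ (MvPolynomial.X i) ∈ approxSubring K ρ) :
    ∃ (P : HenselApprox K ρ) (s : MvPolynomial ι A →+* P.Ring),
      s.comp MvPolynomial.C = P.ofBase.comp α ∧ P.toTarget.comp s = θ := by
  classical
  have := Fintype.ofFinite ι
  obtain ⟨P, hP⟩ := exists_subset_range (K := K) (ρ := ρ)
    (s := Finset.univ.image fun i => θ (MvPolynomial.X i)) (by simpa [Set.range_subset_iff])
  have hX (i : ι) : ∃ x, P.toTarget x = θ (MvPolynomial.X i) := hP (by simp)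
  choose x hx using hX
  refine ⟨P, MvPolynomial.eval₂Hom (P.ofBase.comp α) x, MvPolynomial.eval₂Hom_comp_C _ _, ?_⟩
  refine MvPolynomial.ringHom_ext' ?_ fun i => ?_
  · rw [RingHom.comp_assoc, MvPolynomial.eval₂Hom_comp_C, ← RingHom.comp_assoc, P.comp_eq, hθ]
  · simp [hx]

end HenselApprox

namespace IsHenselization

variable {S C : Type u} [CommRing S] [CommRing C] {K : Ideal S} {ρ : S →+* C}

theorem isHenselEquiv (h : IsHenselization K ρ) : IsHenselEquiv K ρ := h.2

theorem toTarget (h : IsHenselization K ρ) (P : HenselApprox K ρ) :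
    IsHenselization (K.map P.ofBase) P.toTarget := by
  refine ⟨by rw [Ideal.map_map, P.comp_eq]; exact h.1, ?_⟩
  exact IsHenselEquiv.of_comp P.isHenselEquiv.isHenselEpi (by rw [P.comp_eq]; exact h.2)

theorem exists_mul_eq_one_of_sub_one_mem (h : IsHenselization K ρ) {c : C}
    (hc : c ∈ approxSubring K ρ) (hc1 : c - 1 ∈ K.map ρ) :
    ∃ d ∈ approxSubring K ρ, c * d = 1 := by
  obtain ⟨P, x, rfl⟩ := HenselApprox.mem_approxSubring_iff.1 hc
  have hx : x - 1 ∈ K.map P.ofBase :=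
    (h.toTarget P).isHenselEquiv.mem_of_map_mem <| by
      rwa [map_sub, map_one, Ideal.map_map, P.comp_eq]
  have hunit : IsUnit (P.toTarget x) :=
    Ideal.isUnit_of_sub_one_mem_jacobson_bot _ (h.1.jac hc1)
  let Q : HenselApprox (K.map P.ofBase) P.toTarget :=
    { Ring := Localization.Away x
      ofBase := algebraMap _ _
      toTarget := IsLocalization.Away.lift x hunit
      finitePresentation := RingHom.finitePresentation_algebraMap.2
        (IsLocalization.Away.finitePresentation x)
      isHenselEquiv := .localizationAway hx
      comp_eq := IsLocalization.Away.lift_comp x hunit }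
  refine ⟨_, P.toTarget_trans_mem Q (IsLocalization.Away.invSelf x), ?_⟩
  rw [← congr($Q.comp_eq x), RingHom.comp_apply, ← map_mul]
  change Q.toTarget (algebraMap P.Ring (Localization.Away x) x * _) = 1
  rw [IsLocalization.Away.mul_invSelf, map_one]

theorem mem_approxSubring_of_isRoot (h : IsHenselization K ρ) {f : C[X]} (hf : f.Monic)
    (hcoeff : ∀ n, f.coeff n ∈ approxSubring K ρ) {a c : C} (ha : a ∈ approxSubring K ρ)
    (hu : IsUnit (Ideal.Quotient.mk (K.map ρ) (f.derivative.eval a))) (hc : f.IsRoot c)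
    (hca : c - a ∈ K.map ρ) : c ∈ approxSubring K ρ := by
  obtain ⟨P, p, b, hp, rfl, rfl⟩ := HenselApprox.exists_monic_lift hf hcoeff ha
  have hP := h.toTarget P
  have hK : K.map ρ = (K.map P.ofBase).map P.toTarget := by rw [Ideal.map_map, P.comp_eq]
  rw [hK] at hu hca
  rw [derivative_map, eval_map_apply] at hu
  have hb : P.toTarget (p.eval b) ∈ (K.map P.ofBase).map P.toTarget := by
    rw [← Ideal.Quotient.eq_zero_iff_mem, ← eval_map_apply, ← quotientMk_eval_eq_of_sub_mem _ hca,
      hc.eq_zero, map_zero]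
  algebraize [P.toTarget]
  have hmap : (rootNearPair hp b).HasMap c :=
    (rootNearPair_hasMap_iff hP.1.jac hp hb hu c).2 ⟨hc, hca⟩
  let Q : HenselApprox (K.map P.ofBase) P.toTarget :=
    { Ring := (rootNearPair hp b).Ring
      ofBase := algebraMap _ _
      toTarget := ((rootNearPair hp b).lift c hmap).toRingHom
      finitePresentation := RingHom.finitePresentation_algebraMap.2 inferInstance
      isHenselEquiv := .rootNearPair_ring hp (hP.isHenselEquiv.mem_of_map_mem hb)
        (hP.isHenselEquiv.isUnit_quotientMk_of_map hu)
      comp_eq := ((rootNearPair hp b).lift c hmap).comp_algebraMap }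
  rw [← StandardEtalePair.lift_X _ c hmap]
  exact P.toTarget_trans_mem Q (rootNearPair hp b).X

theorem henselianRing_approxSubring (h : IsHenselization K ρ) :
    HenselianRing (approxSubring K ρ) ((K.map ρ).comap (approxSubring K ρ).subtype) where
  jac z hz := by
    rw [Ideal.mem_jacobson_bot]
    intro y
    obtain ⟨d, hd, hzd⟩ := h.exists_mul_eq_one_of_sub_one_mem (z * y + 1).2
      (by simpa using Ideal.mul_mem_right (y : C) _ hz)
    exact .of_mul_eq_one ⟨d, hd⟩ (Subtype.ext hzd)
  is_henselian f hf a ha hu := by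
    set incl := (approxSubring K ρ).subtype
    have hu' : IsUnit (Ideal.Quotient.mk (K.map ρ) ((f.map incl).derivative.eval (incl a))) := by
      rw [derivative_map, eval_map_apply]
      exact hu.map (Ideal.quotientMap (K.map ρ) incl le_rfl)
    obtain ⟨c, hc, hca⟩ := h.1.is_henselian (f.map incl) (hf.map incl) (incl a)
      (by rwa [eval_map_apply]) hu'
    have hc_mem : c ∈ approxSubring K ρ :=
      h.mem_approxSubring_of_isRoot (hf.map incl) (fun n => by rw [coeff_map]; exact (f.coeff n).2)
        a.2 hu' hc hca
    refine ⟨⟨c, hc_mem⟩, Subtype.ext ?_, hca⟩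
    exact (eval_map_apply incl _).symm.trans hc

theorem approxSubring_eq_top (h : IsHenselization K ρ) : approxSubring K ρ = ⊤ := by
  let ρ₀ : S →+* approxSubring K ρ :=
    ρ.codRestrict _ fun s => HenselApprox.mem_approxSubring_iff.2 ⟨.base K ρ, s, rfl⟩
  have hρ₀ : (approxSubring K ρ).subtype.comp ρ₀ = ρ := rfl
  obtain ⟨g, hg, -⟩ := h.isHenselEquiv _ _ h.henselianRing_approxSubring ρ₀ <| by
    rw [← Ideal.map_le_iff_le_comap, Ideal.map_map, hρ₀]
  have hsection : (approxSubring K ρ).subtype.comp g = RingHom.id C :=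
    h.isHenselEquiv.isHenselEpi C _ h.1 _ _ (by rw [RingHom.comp_assoc, hg, hρ₀])
      (by rw [RingHom.comp_assoc, hg, hρ₀, RingHom.id_comp])
  exact (Subring.eq_top_iff' _).2 fun c => by
    rw [← show (g c : C) = c from congr($hsection c)]
    exact (g c).2

end IsHenselization

/-- `φ : A →+* B` is of Henselian finite type with respect to `I`: `B` is a Henselization of
`(R, I·R)` for some `A`-algebra `R` of finite type. -/
def IsHft {A B : Type u} [CommRing A] [CommRing B] (φ : A →+* B) (I : Ideal A) : Prop :=
  ∃ (R : Type u) (_ : CommRing R) (ψ : A →+* R) (ρ : R →+* B),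
    ψ.FiniteType ∧ ρ.comp ψ = φ ∧ IsHenselization (I.map ψ) ρ

theorem IsHfp.isHft {A B : Type u} [CommRing A] [CommRing B] {φ : A →+* B} {I : Ideal A}
    (h : IsHfp φ I) : IsHft φ I := by
  obtain ⟨R, _, ψ, ρ, hψ, hρ⟩ := h
  exact ⟨R, _, ψ, ρ, .of_finitePresentation hψ, hρ⟩

-- The pushout `B ⊗[R] T` has the same Henselization `C` as `T`, because `T → B ⊗[R] T` is a base
-- change of the epimorphism `β`.
theorem isHfp_of_isHenselEpi_of_isHenselization {R T B C : Type u} [CommRing R] [CommRing T]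
    [CommRing B] [CommRing C] {K : Ideal R} {s : R →+* T} {β : R →+* B} {γ : T →+* C} {Φ : B →+* C}
    (hs : s.FinitePresentation) (hβ : IsHenselEpi K β) (hγ : IsHenselization (K.map s) γ)
    (hcomm : Φ.comp β = γ.comp s) : IsHfp Φ (K.map β) := by
  algebraize [s, β, γ.comp s]
  let Φ' : B →ₐ[R] C := { Φ with commutes' := fun r => congr($hcomm r) }
  let γ' : T →ₐ[R] C := { γ with commutes' := fun _ => rfl }
  let μ : B ⊗[R] T →+* C := (Algebra.TensorProduct.productMap Φ' γ').toRingHom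
  have hμγ : μ.comp (Algebra.TensorProduct.includeRight : T →ₐ[R] B ⊗[R] T).toRingHom = γ :=
    congr(($(Algebra.TensorProduct.productMap_right Φ' γ')).toRingHom)
  have hμΦ : μ.comp (algebraMap B (B ⊗[R] T)) = Φ :=
    congr(($(Algebra.TensorProduct.productMap_left Φ' γ')).toRingHom)
  have hμ : IsHenselEquiv ((K.map s).map
      (Algebra.TensorProduct.includeRight : T →ₐ[R] B ⊗[R] T).toRingHom) μ :=
    .of_comp (IsHenselEpi.includeRight (K := K) hβ) (by rw [hμγ]; exact hγ.2)
  have hideal : (K.map s).map (Algebra.TensorProduct.includeRight : T →ₐ[R] B ⊗[R] T).toRingHom =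
      (K.map β).map (algebraMap B (B ⊗[R] T)) := by
    rw [Ideal.map_map, Ideal.map_map]
    exact congr(K.map $(Eq.symm Algebra.TensorProduct.includeLeftRingHom_comp_algebraMap))
  refine ⟨B ⊗[R] T, inferInstance, algebraMap B _, μ, ?_, hμΦ, ?_⟩
  · have : Algebra.FinitePresentation R T := hs
    exact RingHom.finitePresentation_algebraMap.2 inferInstance
  · rw [← hideal]
    refine ⟨?_, hμ⟩
    rw [Ideal.map_map, hμγ]
    exact hγ.1

theorem IsHft.exists_isHenselEpi_mvPolynomial {A B : Type u} [CommRing A] [CommRing B]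
    {φ : A →+* B} {I : Ideal A} (h : IsHft φ I) :
    ∃ (n : ℕ) (β : MvPolynomial (Fin n) A →+* B),
      β.comp MvPolynomial.C = φ ∧ IsHenselEpi (I.map MvPolynomial.C) β := by
  obtain ⟨R, _, ψ, ρ, hψ, hρψ, hρ⟩ := h
  algebraize [ψ]
  obtain ⟨n, π, hπ⟩ := Algebra.FiniteType.iff_quotient_mvPolynomial''.1
    (RingHom.finiteType_algebraMap.1 hψ)
  have hπC : π.toRingHom.comp MvPolynomial.C = ψ := π.comp_algebraMap
  refine ⟨n, ρ.comp π.toRingHom, by rw [RingHom.comp_assoc, hπC, hρψ], ?_⟩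
  refine IsHenselEpi.comp_surjective hπ ?_
  rw [Ideal.map_map, hπC]
  exact hρ.isHenselEquiv.isHenselEpi

theorem isHfp_of_isHfp_isHfp_general {A B C : Type u} [CommRing A] [CommRing B] [CommRing C]
    {I : Ideal A} {φ : A →+* B} {Φ : B →+* C} (hB : IsHft φ I) (hC : IsHfp (Φ.comp φ) I) :
    IsHfp Φ (I.map φ) := by
  obtain ⟨n, β, rfl, hβ⟩ := hB.exists_isHenselEpi_mvPolynomial
  obtain ⟨S, _, α, ρ, hα, hρα, hρ⟩ := hC
  obtain ⟨P, s, hsC, hs⟩ := HenselApprox.exists_ringHom_mvPolynomial (K := I.map α) (ρ := ρ)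
    (α := α) (θ := Φ.comp β) hρα.symm fun i => by simp [hρ.approxSubring_eq_top]
  have hs_fp : s.FinitePresentation :=
    .of_comp_finiteType MvPolynomial.C (hsC ▸ P.finitePresentation.comp hα)
      (RingHom.finiteType_algebraMap.2 inferInstance)
  have hP : IsHenselization ((I.map MvPolynomial.C).map s) P.toTarget := by
    rw [Ideal.map_map, hsC, ← Ideal.map_map]
    exact hρ.toTarget P
  rw [← Ideal.map_map]
  exact isHfp_of_isHenselEpi_of_isHenselization hs_fp hβ hP hs.symm

/-- If `B` and `C` are both hfp over a Henselian pair `(A, I)`, then any `A`-algebra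
homomorphism `Φ : B → C` is hfp with respect to `I·B`. -/
theorem isHfp_of_isHfp_isHfp {A B C : Type u} [CommRing A] [CommRing B] [CommRing C]
    [Algebra A B] [Algebra A C]
    (I : Ideal A) [HenselianRing A I]
    (hB : IsHfp (algebraMap A B) I)
    (hC : IsHfp (algebraMap A C) I)
    (Φ : B →ₐ[A] C) :
    IsHfp Φ.toRingHom (I.map (algebraMap A B)) :=
  isHfp_of_isHfp_isHfp_general hB.isHft (by rwa [← Φ.comp_algebraMap] at hC)
end
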